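/- Suppose in addition that β ∈ (0,1] and each f_{i,j} is β-Hölder with constant C, i.e. |f_{i,j}(u) − f_{i,j}(v)| ≤ C‖u − v‖^β for all u, v ∈ ℝ², and that m ≥ 1/2. Then there exists a constant c > 0 depending only on (d, β, C) such that for every subset A ⊆ S and every x ∈ ℝ^d, |Δ_A(x)| ≤ (c · σ^β)^{|A|}. -/

import Mathlib

/-!
Each factor of the product is at most `2 C σ^β · P(y)` with `P(y) = 1 + ∑ i, y i ^ 2`: by the Hölder
bound it is at most `C (σ s / m)^β`, where `s` is the Euclidean length of `(y_i, y_j)`, and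
`m ≥ 1/2`, `β ≤ 1`, `i ≠ j` give `(1/m)^β ≤ 2` and `s^β ≤ 1 + s² ≤ P(y)`. As `|A| ≤ d²` and `P ≥ 1`,
the integral is at most `(2 C σ^β)^|A|` times a Gaussian moment `I`, which depends only on `d`;
since `P ≤ 4N · exp((∑ i, y i ^ 2) / (4N))` for `N = d²`, this moment is finite. For nonempty `A`
the constant `c = 2 C max(1, I)` absorbs it, while for empty `A` the integral is the total mass `1`
of the Gaussian.
-/

open MeasureTheory Finset

/-- The standard Gaussian density on `ℝ^d`. -/
noncomputable def gaussK (d : ℕ) (y : Fin d → ℝ) : ℝ :=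
  (2 * Real.pi) ^ (-(d : ℝ) / 2) * Real.exp (-(∑ i, (y i) ^ 2) / 2)

lemma gauss_exp_prod (d : ℕ) (b : ℝ) (y : Fin d → ℝ) :
    Real.exp (-b * ∑ i, (y i) ^ 2) = ∏ i, Real.exp (-b * (y i) ^ 2) := by
  rw [Finset.mul_sum, Real.exp_sum]

lemma integrable_exp_neg_sum_sq (d : ℕ) {b : ℝ} (hb : 0 < b) :
    Integrable (fun y : Fin d → ℝ => Real.exp (-b * ∑ i, (y i) ^ 2)) := by
  simp_rw [gauss_exp_prod]
  exact Integrable.fintype_prod (f := fun _ : Fin d => fun t : ℝ => Real.exp (-b * t ^ 2))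
    (fun _ => integrable_exp_neg_mul_sq hb)

lemma integral_gaussK (d : ℕ) : ∫ y : Fin d → ℝ, gaussK d y = 1 := by
  have h2 : ∀ y : Fin d → ℝ, gaussK d y =
      (2 * Real.pi) ^ (-(d : ℝ) / 2) * ∏ i, Real.exp (-(1 / 2) * (y i) ^ 2) := by
    intro y
    rw [← gauss_exp_prod, gaussK]
    congr 2
    ring
  simp_rw [h2]
  rw [integral_const_mul, integral_fintype_prod_volume_eq_pow
    (fun t : ℝ => Real.exp (-(1 / 2) * t ^ 2)), integral_gaussian, Fintype.card_fin]
  have hpi : (0 : ℝ) < 2 * Real.pi := by positivity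
  have h3 : Real.pi / (1 / 2) = 2 * Real.pi := by ring
  rw [h3, Real.sqrt_eq_rpow, ← Real.rpow_natCast, ← Real.rpow_mul hpi.le, ← Real.rpow_add hpi]
  rw [show -(d : ℝ) / 2 + 1 / 2 * (d : ℝ) = 0 by ring, Real.rpow_zero]

lemma gaussK_nonneg (d : ℕ) (y : Fin d → ℝ) : 0 ≤ gaussK d y := by
  unfold gaussK
  positivity

/-- Polynomial growth is dominated by a small part of the Gaussian decay. -/
lemma one_add_pow_le_exp {N : ℕ} (hN : 1 ≤ N) {t : ℝ} (ht : 0 ≤ t) :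
    (1 + t) ^ N ≤ (4 * N : ℝ) ^ N * Real.exp (t / 4) := by
  have hN' : (1 : ℝ) ≤ N := by exact_mod_cast hN
  have hpos : (0 : ℝ) < 4 * N := by positivity
  have h1 : 1 + t ≤ 4 * N * Real.exp (t / (4 * N)) := by
    have h2 := mul_le_mul_of_nonneg_left (Real.add_one_le_exp (t / (4 * N))) hpos.le
    have h3 : 4 * N * (t / (4 * N) + 1) = t + 4 * (N : ℝ) := by field_simp
    linarith
  calc (1 + t) ^ N ≤ (4 * N * Real.exp (t / (4 * N))) ^ N :=
        pow_le_pow_left₀ (by linarith) h1 N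
    _ = (4 * N : ℝ) ^ N * Real.exp (t / 4) := by
        rw [mul_pow, ← Real.exp_nat_mul]
        congr 2
        field_simp

lemma rpow_le_one_add_sq {s β : ℝ} (hs : 0 ≤ s) (hβ0 : 0 < β) (hβ1 : β ≤ 1) :
    s ^ β ≤ 1 + s ^ 2 := by
  rcases le_total s 1 with h | h
  · have := Real.rpow_le_one hs h hβ0.le
    nlinarith [sq_nonneg s]
  · have := Real.rpow_le_rpow_of_exponent_le h hβ1
    rw [Real.rpow_one] at this
    nlinarith

/-- The Hölder modulus of a single factor, separated into the scale `σ^β` and a polynomial weight. -/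
lemma factor_bound {d : ℕ} {β m σ : ℝ} (hβ0 : 0 < β) (hβ1 : β ≤ 1) (hm : 1 / 2 ≤ m) (hσ : 0 ≤ σ)
    {i j : Fin d} (hij : i ≠ j) (x y : Fin d → ℝ) :
    Real.sqrt (((x i + σ * y i) / m - x i / m) ^ 2 + ((x j + σ * y j) / m - x j / m) ^ 2) ^ β
      ≤ 2 * σ ^ β * (1 + ∑ k, (y k) ^ 2) := by
  have hm0 : 0 < m := by linarith
  have hs : Real.sqrt (((x i + σ * y i) / m - x i / m) ^ 2 +
      ((x j + σ * y j) / m - x j / m) ^ 2) = 1 / m * (σ * Real.sqrt (y i ^ 2 + y j ^ 2)) := by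
    rw [show ((x i + σ * y i) / m - x i / m) ^ 2 + ((x j + σ * y j) / m - x j / m) ^ 2 =
      (1 / m * σ) ^ 2 * (y i ^ 2 + y j ^ 2) by ring, Real.sqrt_mul (sq_nonneg _),
      Real.sqrt_sq (by positivity)]
    ring
  rw [hs, Real.mul_rpow (by positivity) (by positivity), Real.mul_rpow hσ (by positivity)]
  have h1 : (1 / m) ^ β ≤ 2 := by
    have h2 : 1 / m ≤ 2 := by rw [div_le_iff₀ hm0]; linarith
    calc (1 / m) ^ β ≤ (2 : ℝ) ^ β := Real.rpow_le_rpow (by positivity) h2 hβ0.le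
      _ ≤ (2 : ℝ) ^ (1 : ℝ) := Real.rpow_le_rpow_of_exponent_le (by norm_num) hβ1
      _ = 2 := Real.rpow_one 2
  have h3 : Real.sqrt (y i ^ 2 + y j ^ 2) ^ β ≤ 1 + ∑ k, (y k) ^ 2 := by
    refine (rpow_le_one_add_sq (Real.sqrt_nonneg _) hβ0 hβ1).trans ?_
    rw [Real.sq_sqrt (by positivity), ← Finset.sum_pair (f := fun k => y k ^ 2) hij]
    gcongr
    exact Finset.subset_univ _
  calc (1 / m) ^ β * (σ ^ β * Real.sqrt (y i ^ 2 + y j ^ 2) ^ β)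
      ≤ 2 * (σ ^ β * (1 + ∑ k, (y k) ^ 2)) := by gcongr
    _ = _ := by ring

/-- if each `f_{i,j}` is `β`-Hölder with constant `C` (`β ∈ (0,1]`) and `m ≥ 1/2`,
then there is `c > 0` depending only on `(d, β, C)` such that `|Δ_A(x)| ≤ (c σ^β)^{|A|}`
for every `A ⊆ S` and every `x`. -/
theorem residual_term_bound
    (d : ℕ) (hd : 1 ≤ d) (β C : ℝ) (hβ : β ∈ Set.Ioc (0 : ℝ) 1) (hC : 0 < C) :
    ∃ c : ℝ, 0 < c ∧
      ∀ (S : Finset (Fin d × Fin d)), (∀ e ∈ S, e.1 < e.2) →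
      ∀ f : Fin d → Fin d → ℝ → ℝ → ℝ,
        (∀ e ∈ S, Measurable (Function.uncurry (f e.1 e.2))) →
        (∃ M : ℝ, ∀ e ∈ S, ∀ a b : ℝ, |f e.1 e.2 a b| ≤ M) →
        (∀ e ∈ S, ∀ a b a' b' : ℝ,
          |f e.1 e.2 a b - f e.1 e.2 a' b'| ≤
            C * Real.sqrt ((a - a') ^ 2 + (b - b') ^ 2) ^ β) →
      ∀ m σ : ℝ, m ∈ Set.Ico (1 / 2 : ℝ) 1 → σ = Real.sqrt (1 - m ^ 2) →
      ∀ A ∈ S.powerset, ∀ x : Fin d → ℝ,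
        |∫ y : Fin d → ℝ,
            (∏ e ∈ A,
                (f e.1 e.2 ((x e.1 + σ * y e.1) / m) ((x e.2 + σ * y e.2) / m)
                  - f e.1 e.2 (x e.1 / m) (x e.2 / m))) * gaussK d y|
          ≤ (c * σ ^ β) ^ A.card := by
  obtain ⟨hβ0, hβ1⟩ := hβ
  obtain ⟨N, hN⟩ : ∃ N : ℕ, N = d * d := ⟨_, rfl⟩
  have hN1 : 1 ≤ N := by rw [hN]; exact Nat.mul_pos hd hd
  obtain ⟨B, hB⟩ : ∃ B : ℝ, B = (4 * N : ℝ) ^ N * (2 * Real.pi) ^ (-(d : ℝ) / 2) := ⟨_, rfl⟩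
  have hGint : Integrable (fun y : Fin d → ℝ => B * Real.exp (-(1 / 4) * ∑ i, (y i) ^ 2)) :=
    (integrable_exp_neg_sum_sq d (by norm_num)).const_mul B
  have hPG : ∀ y : Fin d → ℝ, (1 + ∑ i, (y i) ^ 2) ^ N * gaussK d y ≤
      B * Real.exp (-(1 / 4) * ∑ i, (y i) ^ 2) := by
    intro y
    have ht : 0 ≤ ∑ i, (y i) ^ 2 := Finset.sum_nonneg fun i _ => sq_nonneg _
    refine (mul_le_mul_of_nonneg_right (one_add_pow_le_exp hN1 ht) (gaussK_nonneg d y)).trans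
      (le_of_eq ?_)
    rw [gaussK, hB, show -(1 / 4) * ∑ i, (y i) ^ 2 =
      (∑ i, (y i) ^ 2) / 4 + -(∑ i, (y i) ^ 2) / 2 by ring, Real.exp_add]
    ring
  obtain ⟨I, hI⟩ : ∃ I : ℝ, I = ∫ y : Fin d → ℝ, B * Real.exp (-(1 / 4) * ∑ i, (y i) ^ 2) :=
    ⟨_, rfl⟩
  refine ⟨2 * C * max 1 I, by positivity, ?_⟩
  intro S hS f _ _ hf m σ hm hσ A hA x
  have hAS := Finset.mem_powerset.mp hA
  have hσ0 : 0 ≤ σ := hσ ▸ Real.sqrt_nonneg _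
  rcases A.eq_empty_or_nonempty with rfl | hne
  · simp [integral_gaussK]
  have hk1 : 1 ≤ A.card := hne.card_pos
  have hkN : A.card ≤ N := by
    have := A.card_le_univ
    simpa [hN] using this
  have hbound : ∀ y : Fin d → ℝ, ‖(∏ e ∈ A,
      (f e.1 e.2 ((x e.1 + σ * y e.1) / m) ((x e.2 + σ * y e.2) / m)
        - f e.1 e.2 (x e.1 / m) (x e.2 / m))) * gaussK d y‖ ≤
      (2 * C * σ ^ β) ^ A.card * (B * Real.exp (-(1 / 4) * ∑ i, (y i) ^ 2)) := by
    intro y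
    have ht : 0 ≤ ∑ i, (y i) ^ 2 := Finset.sum_nonneg fun i _ => sq_nonneg _
    have hprod : |∏ e ∈ A, (f e.1 e.2 ((x e.1 + σ * y e.1) / m) ((x e.2 + σ * y e.2) / m)
        - f e.1 e.2 (x e.1 / m) (x e.2 / m))| ≤
        (2 * C * σ ^ β * (1 + ∑ i, (y i) ^ 2)) ^ A.card := by
      rw [Finset.abs_prod, ← Finset.prod_const]
      refine Finset.prod_le_prod (fun _ _ => abs_nonneg _) fun e he => ?_
      refine (hf e (hAS he) _ _ _ _).trans ?_
      have := mul_le_mul_of_nonneg_left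
        (factor_bound hβ0 hβ1 hm.1 hσ0 (hS e (hAS he)).ne x y) hC.le
      linarith
    rw [Real.norm_eq_abs, abs_mul, abs_of_nonneg (gaussK_nonneg d y)]
    calc _ ≤ (2 * C * σ ^ β * (1 + ∑ i, (y i) ^ 2)) ^ A.card * gaussK d y :=
          mul_le_mul_of_nonneg_right hprod (gaussK_nonneg d y)
      _ = (2 * C * σ ^ β) ^ A.card * ((1 + ∑ i, (y i) ^ 2) ^ A.card * gaussK d y) := by
          rw [mul_pow]; ring
      _ ≤ (2 * C * σ ^ β) ^ A.card * ((1 + ∑ i, (y i) ^ 2) ^ N * gaussK d y) := by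
          have := gaussK_nonneg d y
          have := pow_le_pow_right₀ (show 1 ≤ 1 + ∑ i, (y i) ^ 2 by linarith) hkN
          gcongr
      _ ≤ _ := by
          have := hPG y
          gcongr
  have hint := norm_integral_le_of_norm_le (hGint.const_mul ((2 * C * σ ^ β) ^ A.card))
    (Filter.Eventually.of_forall hbound)
  rw [integral_const_mul, ← hI, Real.norm_eq_abs] at hint
  refine hint.trans ?_
  have hIk : I ≤ (max 1 I) ^ A.card :=
    (le_max_right 1 I).trans (le_self_pow₀ (le_max_left 1 I) (by omega))
  calc (2 * C * σ ^ β) ^ A.card * I ≤ (2 * C * σ ^ β) ^ A.card * (max 1 I) ^ A.card := by gcongr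
    _ = _ := by rw [← mul_pow]; ring
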